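/- Let S : ℕ → ℝ≥0 satisfy S(t) ≤ (1 − C₃γ_t)S(t−1) + C₂²γ_t² + 2(1 − C₃γ_t)M_t² for all t ≥ 1, where γ_t = cq^{t−1}, M_t = K p^{t−1} with constants C₂, C₃, c, K > 0, 0 < q < p < 1, 0 ≤ C₃γ_t ≤ 1 for all t, and S(0) ≤ 2C₁. Then limsup_{t→∞} S(t) ≤ 2C₁e^{−C₃c/(1−q)} + C₂²c²/(1−q²) + 2K²/(1−p²). -/

import Mathlib

open Filter

/-!
Since `1 - x ≤ exp (-x)` and `S ≥ 0`, one step of the recursion multiplies `S` by at most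
`exp (-C₃ γ_t)` and adds at most `C₂² γ_t² + 2 M_t²`. The discrete Grönwall inequality, with all
contraction factors on the added terms bounded by `1`, gives
`S n ≤ S 0 * exp (-∑ C₃ γ_t) + ∑ (C₂² γ_t² + 2 M_t²)`; letting `n → ∞` turns the three sums into
geometric series.
-/

theorem discrete_gronwall_prod_of_le_one {R : Type*} [CommSemiring R] [PartialOrder R]
    [IsOrderedRing R] {u b r : ℕ → R} (hu : ∀ n, u (n + 1) ≤ r n * u n + b n)
    (hr₀ : ∀ n, 0 ≤ r n) (hr₁ : ∀ n, r n ≤ 1) (hb : ∀ n, 0 ≤ b n) (n : ℕ) :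
    u n ≤ u 0 * ∏ i ∈ Finset.range n, r i + ∑ k ∈ Finset.range n, b k := by
  have gronwall := discrete_gronwall_prod_general (fun n _ ↦ hu n) (fun n _ ↦ hr₀ n) n.zero_le
  rw [← Finset.range_eq_Ico] at gronwall
  refine gronwall.trans (add_le_add_right (Finset.sum_le_sum fun k _ ↦ ?_) _)
  exact mul_le_of_le_one_right (hb k)
    (Finset.prod_le_one (fun i _ ↦ hr₀ i) fun i _ ↦ hr₁ i)

theorem limsup_le_mul_add_of_hasProd_of_hasSum {u b r : ℕ → ℝ} {P B : ℝ}
    (hu : ∀ n, u (n + 1) ≤ r n * u n + b n) (hr₀ : ∀ n, 0 ≤ r n) (hr₁ : ∀ n, r n ≤ 1)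
    (hb : ∀ n, 0 ≤ b n) (hP : HasProd r P) (hB : HasSum b B)
    (hu_cobdd : IsCoboundedUnder (· ≤ ·) atTop u) :
    limsup u atTop ≤ u 0 * P + B := by
  have lim := (hP.tendsto_prod_nat.const_mul (u 0)).add hB.tendsto_sum_nat
  rw [← lim.limsup_eq]
  exact limsup_le_limsup (.of_forall <| discrete_gronwall_prod_of_le_one hu hr₀ hr₁ hb)
    hu_cobdd lim.isBoundedUnder_le

theorem limsup_le_mul_exp_neg_add_of_hasSum {u a b : ℕ → ℝ} {A B : ℝ}
    (hu : ∀ n, u (n + 1) ≤ (1 - a n) * u n + b n) (hu₀ : ∀ n, 0 ≤ u n) (ha : ∀ n, 0 ≤ a n)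
    (hb : ∀ n, 0 ≤ b n) (hA : HasSum a A) (hB : HasSum b B) :
    limsup u atTop ≤ u 0 * Real.exp (-A) + B := by
  refine limsup_le_mul_add_of_hasProd_of_hasSum (r := fun n ↦ Real.exp (-a n)) (fun n ↦ ?_)
    (fun n ↦ (Real.exp_pos _).le) (fun n ↦ Real.exp_le_one_iff.2 (neg_nonpos.2 (ha n)))
    hb hA.neg.rexp hB (isCoboundedUnder_le_of_le atTop hu₀)
  calc
    u (n + 1) ≤ (1 - a n) * u n + b n := hu n
    _ ≤ Real.exp (-a n) * u n + b n := by
      gcongr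
      exacts [hu₀ n, Real.one_sub_le_exp_neg (a n)]

theorem hasSum_sq_mul_geometric {𝕜 : Type*} [NormedField 𝕜] {r : 𝕜} (hr : ‖r‖ < 1) (x : 𝕜) :
    HasSum (fun n : ℕ ↦ (x * r ^ n) ^ 2) (x ^ 2 / (1 - r ^ 2)) := by
  have hr_sq : ‖r ^ 2‖ < 1 := by
    simpa only [norm_pow] using pow_lt_one₀ (norm_nonneg r) hr two_ne_zero
  simpa only [mul_pow, pow_right_comm, div_eq_mul_inv] using
    (hasSum_geometric_of_norm_lt_one hr_sq).mul_left (x ^ 2)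

theorem stmt12_general {C₁ C₂ C₃ c K q p : ℝ} (hC₃ : 0 ≤ C₃) (hc : 0 ≤ c)
    (hq₀ : 0 ≤ q) (hq₁ : q < 1) (hp : |p| < 1) {γ M : ℕ → ℝ}
    (hγ : ∀ t, γ t = c * q ^ (t - 1)) (hM : ∀ t, M t = K * p ^ (t - 1))
    {S : ℕ → ℝ} (hSnonneg : ∀ t, 0 ≤ S t) (hS0 : S 0 ≤ 2 * C₁)
    (hrec : ∀ t : ℕ, 1 ≤ t →
      S t ≤ (1 - C₃ * γ t) * S (t - 1) + C₂ ^ 2 * γ t ^ 2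
            + 2 * (1 - C₃ * γ t) * M t ^ 2) :
    limsup S atTop ≤
      2 * C₁ * Real.exp (-C₃ * c / (1 - q)) + C₂ ^ 2 * c ^ 2 / (1 - q ^ 2)
        + 2 * K ^ 2 / (1 - p ^ 2) := by
  have rate_nonneg (n : ℕ) : 0 ≤ C₃ * (c * q ^ n) := by positivity
  have rate_sum : HasSum (fun n : ℕ ↦ C₃ * (c * q ^ n)) (C₃ * c / (1 - q)) := by
    simpa only [← mul_assoc, div_eq_mul_inv] using
      (hasSum_geometric_of_lt_one hq₀ hq₁).mul_left (C₃ * c)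
  have noise_sum := ((hasSum_sq_mul_geometric (abs_lt.2 ⟨by linarith, hq₁⟩) c).mul_left
    (C₂ ^ 2)).add ((hasSum_sq_mul_geometric hp K).mul_left 2)
  have step (n : ℕ) : S (n + 1) ≤ (1 - C₃ * (c * q ^ n)) * S n +
      (C₂ ^ 2 * (c * q ^ n) ^ 2 + 2 * (K * p ^ n) ^ 2) := by
    have recursion := hrec (n + 1) n.succ_pos
    simp only [hγ, hM, Nat.add_sub_cancel] at recursion
    linarith [mul_nonneg (rate_nonneg n) (sq_nonneg (K * p ^ n))]
  calc
    limsup S atTop ≤ S 0 * Real.exp (-(C₃ * c / (1 - q))) +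
        (C₂ ^ 2 * (c ^ 2 / (1 - q ^ 2)) + 2 * (K ^ 2 / (1 - p ^ 2))) :=
      limsup_le_mul_exp_neg_add_of_hasSum step hSnonneg rate_nonneg (fun n ↦ by positivity)
        rate_sum noise_sum
    _ ≤ 2 * C₁ * Real.exp (-(C₃ * c / (1 - q))) +
        (C₂ ^ 2 * (c ^ 2 / (1 - q ^ 2)) + 2 * (K ^ 2 / (1 - p ^ 2))) := by gcongr
    _ = 2 * C₁ * Real.exp (-C₃ * c / (1 - q)) + C₂ ^ 2 * c ^ 2 / (1 - q ^ 2)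
        + 2 * K ^ 2 / (1 - p ^ 2) := by
      rw [neg_mul, neg_div]; ring

theorem stmt12 (C₁ C₂ C₃ c K q p : ℝ)
    (hC₁ : 0 < C₁) (hC₂ : 0 < C₂) (hC₃ : 0 < C₃) (hc : 0 < c) (hK : 0 < K)
    (hq : 0 < q) (hqp : q < p) (hp : p < 1)
    (γ M : ℕ → ℝ)
    (hγ : ∀ t, γ t = c * q ^ (t - 1)) (hM : ∀ t, M t = K * p ^ (t - 1))
    (hγbound : ∀ t, 0 ≤ C₃ * γ t ∧ C₃ * γ t ≤ 1)
    (S : ℕ → ℝ) (hSnonneg : ∀ t, 0 ≤ S t)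
    (hS0 : S 0 ≤ 2 * C₁)
    (hrec : ∀ t : ℕ, 1 ≤ t →
      S t ≤ (1 - C₃ * γ t) * S (t - 1) + C₂ ^ 2 * γ t ^ 2
            + 2 * (1 - C₃ * γ t) * M t ^ 2) :
    limsup S atTop ≤
      2 * C₁ * Real.exp (-C₃ * c / (1 - q)) + C₂ ^ 2 * c ^ 2 / (1 - q ^ 2)
        + 2 * K ^ 2 / (1 - p ^ 2) :=
  stmt12_general hC₃.le hc.le hq.le (hqp.trans hp) (abs_lt.2 ⟨by linarith, hp⟩)
    hγ hM hSnonneg hS0 hrec
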